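/- For every nonzero vector v ∈ E*_rW, p_i(A)v = E*_{r+i}A^i v for 0 ≤ i ≤ d, and p_{d+1}(A)v = 0; dually, for every nonzero u ∈ E_tW, p*_i(A*)u = E_{t+i}(A*)^i u for 0 ≤ i ≤ d, and p*_{d+1}(A*)u = 0. -/

import Mathlib

open Matrix
open scoped Classical

noncomputable section

/-- The full setup: a `Q`-polynomial distance-regular graph `Γ = (X,R)` of diameter `D ≥ 3`,
with adjacency matrix `A`, primitive idempotents `E_i`, eigenvalues `θ_i`,
Krein parameters `q^h_{ij}`, a fixed base vertex `x`, dual primitive idempotents `E*_i`,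
dual adjacency matrix `A*` and dual eigenvalues `θ*_i`. -/
structure TSetup (X : Type*) [Fintype X] [DecidableEq X] where
  G : SimpleGraph X
  hGconn : G.Connected
  D : ℕ
  hD3 : 3 ≤ D
  hDiamLe : ∀ y z : X, G.dist y z ≤ D
  hDiamEq : ∃ y z : X, G.dist y z = D
  p : ℕ → ℕ → ℕ → ℕ
  hDRG : ∀ h i j : ℕ, h ≤ D → i ≤ D → j ≤ D → ∀ y z : X, G.dist y z = h →
    Nat.card {w : X // G.dist y w = i ∧ G.dist z w = j} = p h i j
  A : Matrix X X ℂ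
  hA : ∀ y z : X, A y z = if G.Adj y z then 1 else 0
  E : ℕ → Matrix X X ℂ
  hEzero : ∀ i : ℕ, D < i → E i = 0
  hEsum : ∑ i ∈ Finset.range (D + 1), E i = 1
  hEidem : ∀ i j : ℕ, i ≤ D → j ≤ D → E i * E j = if i = j then E i else 0
  hEsymm : ∀ i : ℕ, (E i)ᵀ = E i
  hEreal : ∀ i : ℕ, (E i).map (starRingEnd ℂ) = E i
  hE0 : E 0 = (Fintype.card X : ℂ)⁻¹ • Matrix.of (fun _ _ => (1 : ℂ))
  θ : ℕ → ℝ
  hθinj : ∀ i j : ℕ, i ≤ D → j ≤ D → θ i = θ j → i = j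
  hAspec : A = ∑ i ∈ Finset.range (D + 1), (θ i : ℂ) • E i
  q : ℕ → ℕ → ℕ → ℝ
  hKrein : ∀ i j : ℕ, i ≤ D → j ≤ D →
    Matrix.hadamard (E i) (E j) =
      (Fintype.card X : ℂ)⁻¹ • ∑ h ∈ Finset.range (D + 1), (q h i j : ℂ) • E h
  hQpoly0 : ∀ h i j : ℕ, h ≤ D → i ≤ D → j ≤ D →
    (i + j < h ∨ h + j < i ∨ h + i < j) → q h i j = 0
  hQpoly1 : ∀ h i j : ℕ, h ≤ D → i ≤ D → j ≤ D →
    (h = i + j ∨ i = h + j ∨ j = h + i) → q h i j ≠ 0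
  x : X
  Estar : ℕ → Matrix X X ℂ
  hEstarzero : ∀ i : ℕ, D < i → Estar i = 0
  hEstar : ∀ i : ℕ, i ≤ D → ∀ y z : X,
    Estar i y z = if y = z ∧ G.dist x y = i then 1 else 0
  Astar : Matrix X X ℂ
  hAstar : ∀ y z : X, Astar y z = if y = z then (Fintype.card X : ℂ) * E 1 x y else 0
  θstar : ℕ → ℝ
  hθstarinj : ∀ i j : ℕ, i ≤ D → j ≤ D → θstar i = θstar j → i = j
  hAstarspec : Astar = ∑ i ∈ Finset.range (D + 1), (θstar i : ℂ) • Estar i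

variable {X : Type*} [Fintype X] [DecidableEq X]

/-- The Terwilliger algebra `T = T(x)`, generated by `A` and `A*`. -/
def TSetup.T (S : TSetup X) : Subalgebra ℂ (Matrix X X ℂ) :=
  Algebra.adjoin ℂ {S.A, S.Astar}

/-- A thin irreducible `T`-module `W` with endpoint `r`, dual endpoint `t` and diameter `d`,
where `E*_i W ≠ 0` iff `r ≤ i ≤ r + d` and `E_i W ≠ 0` iff `t ≤ i ≤ t + d`. -/
structure TMod (S : TSetup X) where
  W : Submodule ℂ (X → ℂ)
  hWinv : ∀ B ∈ S.T, ∀ w ∈ W, B *ᵥ w ∈ W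
  hWne : W ≠ ⊥
  hWirr : ∀ U : Submodule ℂ (X → ℂ), U ≤ W →
    (∀ B ∈ S.T, ∀ w ∈ U, B *ᵥ w ∈ U) → U = ⊥ ∨ U = W
  hthin : ∀ i : ℕ, Module.finrank ℂ (W.map (S.Estar i).mulVecLin) ≤ 1
  r : ℕ
  t : ℕ
  d : ℕ
  hr : ∀ i : ℕ, W.map (S.Estar i).mulVecLin ≠ ⊥ ↔ r ≤ i ∧ i ≤ r + d
  ht : ∀ i : ℕ, W.map (S.E i).mulVecLin ≠ ⊥ ↔ t ≤ i ∧ i ≤ t + d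

open Classical in
/-- The action of a matrix `B` on `W` (the restriction of `B` to `W`; defined to be `0`
if `B` does not leave `W` invariant). -/
def actW (S : TSetup X) (M : TMod S) (B : Matrix X X ℂ) : M.W →ₗ[ℂ] M.W :=
  if h : ∀ w ∈ M.W, B.mulVecLin w ∈ M.W then B.mulVecLin.restrict h else 0

/-- `tr_W(B)`: the trace of the action of `B` on `W`. -/
def trW (S : TSetup X) (M : TMod S) (B : Matrix X X ℂ) : ℂ :=
  LinearMap.trace ℂ M.W (actW S M B)

/-- `a_i(W) = tr_W(E*_{r+i} A)`. -/
def aW (S : TSetup X) (M : TMod S) (i : ℕ) : ℂ :=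
  trW S M (S.Estar (M.r + i) * S.A)

/-- `x_i(W) = tr_W(E*_{r+i} A E*_{r+i-1} A)`, with `x_0(W) = 0`. -/
def xW (S : TSetup X) (M : TMod S) (i : ℕ) : ℂ :=
  if i = 0 then 0 else trW S M (S.Estar (M.r + i) * S.A * S.Estar (M.r + i - 1) * S.A)

/-- `a*_i(W) = tr_W(E_{t+i} A*)`. -/
def astarW (S : TSetup X) (M : TMod S) (i : ℕ) : ℂ :=
  trW S M (S.E (M.t + i) * S.Astar)

/-- `x*_i(W) = tr_W(E_{t+i} A* E_{t+i-1} A*)`, with `x*_0(W) = 0`. -/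
def xstarW (S : TSetup X) (M : TMod S) (i : ℕ) : ℂ :=
  if i = 0 then 0 else trW S M (S.E (M.t + i) * S.Astar * S.E (M.t + i - 1) * S.Astar)

/-- The polynomials `p_i`: `p_0 = 1`, `p_{-1} = 0`,
`λ p_i = p_{i+1} + a_i(W) p_i + x_i(W) p_{i-1}`. -/
def pW (S : TSetup X) (M : TMod S) : ℕ → Polynomial ℂ
  | 0 => 1
  | 1 => Polynomial.X - Polynomial.C (aW S M 0)
  | (n + 2) =>
      (Polynomial.X - Polynomial.C (aW S M (n + 1))) * pW S M (n + 1)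
        - Polynomial.C (xW S M (n + 1)) * pW S M n

/-- The polynomials `p*_i`: `p*_0 = 1`, `p*_{-1} = 0`,
`λ p*_i = p*_{i+1} + a*_i(W) p*_i + x*_i(W) p*_{i-1}`. -/
def pstarW (S : TSetup X) (M : TMod S) : ℕ → Polynomial ℂ
  | 0 => 1
  | 1 => Polynomial.X - Polynomial.C (astarW S M 0)
  | (n + 2) =>
      (Polynomial.X - Polynomial.C (astarW S M (n + 1))) * pstarW S M (n + 1)
        - Polynomial.C (xstarW S M (n + 1)) * pstarW S M n

/-- The Hermitian inner product `⟨u,v⟩ = Σ_y u_y conj(v_y)` on `ℂ^X`. -/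
def herm (u v : X → ℂ) : ℂ := ∑ y, u y * (starRingEnd ℂ) (v y)

/-- `ν(W)`, the multiplicative inverse of `m_0(W) = tr_W(E_t E*_r)`. -/
def nuW (S : TSetup X) (M : TMod S) : ℂ :=
  (trW S M (S.E M.t * S.Estar M.r))⁻¹

/-- `k_i(W) = ν(W) m*_i(W)` where `m*_i(W) = tr_W(E*_{r+i} E_t)`. -/
def kW (S : TSetup X) (M : TMod S) (i : ℕ) : ℂ :=
  nuW S M * trW S M (S.Estar (M.r + i) * S.E M.t)

/-- `k*_i(W) = ν(W) m_i(W)` where `m_i(W) = tr_W(E_{t+i} E*_r)`. -/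
def kstarW (S : TSetup X) (M : TMod S) (i : ℕ) : ℂ :=
  nuW S M * trW S M (S.E (M.t + i) * S.Estar M.r)

/-!
On `W` the idempotents `e i = E*_{r+i}` have rank one, so every sandwich `e i * Y * e i` is the
scalar `tr (e i * Y)` times `e i`. In particular `e i * A * e i = a_i e i` and
`e i * A * e (i+1) * A * e i = x_{i+1} e i`. Since `A` is tridiagonal with respect to the complete
system `e`, the elements `m_i = e i * A ^ i * e 0` satisfy
`A m_i = m_{i+1} + a_i m_i + x_i m_{i-1}`, which is the recurrence of `p_i(A) e 0`; and
`m_{d+1} = 0` because `e (d+1) = 0`.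

The dual half is the same computation with `(A*, E_{t+i})` in place of `(A, E*_{r+i})`. It needs two
facts. First, `A*` is tridiagonal with respect to `E`: the squared Frobenius norm of `E_i A* E_j` is
a quadratic form in `E_i ∘ E_j` evaluated at a multiple of a column of `E_1`, hence a multiple of
`q^1_{ij}`. Second, the `E_{t+i}` also have rank one on `W`: these `d + 1` nonzero idempotents
have ranks adding up to `dim W`, which is at most `d + 1` because `W` is thin.
-/

open Polynomial Finset

section OrthogonalIdempotents

variable {ι R : Type*} [Semiring R] {s : Finset ι} {e : ι → R}

lemma eq_of_forall_mul_eq_of_sum_eq_one (hs : ∑ i ∈ s, e i = 1) {y z : R}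
    (h : ∀ i ∈ s, e i * y = e i * z) : y = z := by
  rw [← one_mul y, ← one_mul z, ← hs, sum_mul, sum_mul, sum_congr rfl h]

lemma eq_zero_of_notMem_of_sum_eq_one (he : OrthogonalIdempotents e) (hs : ∑ i ∈ s, e i = 1)
    {i : ι} (hi : i ∉ s) : e i = 0 := by
  simpa only [hs, mul_one] using he.mul_sum_of_notMem hi

lemma mul_aeval_of_mul_eq_smul {K : Type*} [CommSemiring K] [Algebra K R] {f b : R} {θ : K}
    (h : f * b = θ • f) (p : K[X]) :
    f * aeval b p = p.eval θ • f := by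
  induction p using Polynomial.induction_on with
  | C c => simp [← Algebra.commutes, ← Algebra.smul_def]
  | add p q hp hq => rw [map_add, mul_add, hp, hq, eval_add, add_smul]
  | monomial n c ih =>
    rw [pow_succ, ← mul_assoc, map_mul, aeval_X, ← mul_assoc, ih, smul_mul_assoc, h, smul_smul,
      ← eval_mul_X, mul_assoc, ← pow_succ]

lemma mem_adjoin_sum_smul {K : Type*} [Field K] [Algebra K R] (he : OrthogonalIdempotents e)
    (hs : ∑ i ∈ s, e i = 1) {θ : ι → K} (hθ : Set.InjOn θ s) (i : ι) :
    e i ∈ Algebra.adjoin K {∑ j ∈ s, θ j • e j} := by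
  by_cases hi : i ∈ s
  · have mul_sum_smul (k) (hk : k ∈ s) : e k * ∑ j ∈ s, θ j • e j = θ k • e k := by
      simp [mul_sum, he.mul_eq, hk]
    have eq_aeval : e i = aeval (∑ j ∈ s, θ j • e j) (Lagrange.basis s θ i) := by
      refine eq_of_forall_mul_eq_of_sum_eq_one hs fun k hk => ?_
      rw [mul_aeval_of_mul_eq_smul (mul_sum_smul k hk), he.mul_eq]
      split_ifs with hki
      · rw [hki, Lagrange.eval_basis_self hθ hi, one_smul]
      · rw [Lagrange.eval_basis_of_ne (Ne.symm hki) hk, zero_smul]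
    rw [eq_aeval]
    exact aeval_mem_adjoin_singleton K _
  · rw [eq_zero_of_notMem_of_sum_eq_one he hs hi]
    exact zero_mem _

end OrthogonalIdempotents

section Rank

variable {K V : Type*} [Field K] [AddCommGroup V] [Module K V] [FiniteDimensional K V]

lemma mul_mul_eq_trace_smul_of_finrank_le_one {f : Module.End K V}
    (hf : Module.finrank K (LinearMap.range f) ≤ 1) (g : Module.End K V) :
    f * g * f = LinearMap.trace K V (f * g) • f := by
  rcases Nat.le_one_iff_eq_zero_or_eq_one.mp hf with h0 | h1
  · rw [Submodule.finrank_eq_zero, LinearMap.range_eq_bot] at h0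
    simp [h0]
  · obtain ⟨c, hc, -⟩ := LinearMap.existsUnique_eq_smul_id_of_finrank_eq_one h1
      (f.rangeRestrict ∘ₗ g ∘ₗ (LinearMap.range f).subtype)
    have trace_eq : LinearMap.trace K V (f * g) = c := calc
      LinearMap.trace K V (f * g)
          = LinearMap.trace K V ((LinearMap.range f).subtype ∘ₗ f.rangeRestrict ∘ₗ g) := rfl
      _ = c := by
        rw [LinearMap.trace_comp_comm', LinearMap.comp_assoc, hc, map_smul, LinearMap.trace_id, h1,
          Nat.cast_one, smul_eq_mul, mul_one]
    ext v
    simpa [trace_eq] using congrArg Subtype.val (LinearMap.congr_fun hc (f.rangeRestrict v))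

lemma sum_finrank_range_eq_finrank [CharZero K] {ι : Type*} {s : Finset ι}
    {e : ι → Module.End K V} (he : OrthogonalIdempotents e) (hs : ∑ i ∈ s, e i = 1) :
    ∑ i ∈ s, Module.finrank K (LinearMap.range (e i)) = Module.finrank K V := by
  have trace_eq (i : ι) :
      LinearMap.trace K V (e i) = (Module.finrank K (LinearMap.range (e i)) : K) :=
    (LinearMap.IsIdempotentElem.isProj_range _ (he.idem i)).trace
  apply Nat.cast_injective (R := K)
  rw [Nat.cast_sum, ← LinearMap.trace_one, ← hs, map_sum]
  exact sum_congr rfl fun i _ => (trace_eq i).symm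

lemma finrank_range_le_one_of_ne_zero [CharZero K] {ι : Type*} {s : Finset ι}
    {e f : ι → Module.End K V} (he : OrthogonalIdempotents e) (hes : ∑ i ∈ s, e i = 1)
    (hf : OrthogonalIdempotents f) (hfs : ∑ i ∈ s, f i = 1)
    (he1 : ∀ i ∈ s, Module.finrank K (LinearMap.range (e i)) ≤ 1) (hf0 : ∀ i ∈ s, f i ≠ 0) (i : ι) :
    Module.finrank K (LinearMap.range (f i)) ≤ 1 := by
  by_cases hi : i ∈ s
  · have one_le (j) (hj : j ∈ s) : 1 ≤ Module.finrank K (LinearMap.range (f j)) := by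
      rw [Submodule.one_le_finrank_iff, ne_eq, LinearMap.range_eq_bot]
      exact hf0 j hj
    have sum_le : ∑ j ∈ s, Module.finrank K (LinearMap.range (f j)) ≤ ∑ j ∈ s, 1 := by
      rw [sum_finrank_range_eq_finrank hf hfs, ← sum_finrank_range_eq_finrank he hes]
      exact sum_le_sum he1
    exact ((sum_eq_sum_iff_of_le one_le).mp ((sum_le_sum one_le).antisymm sum_le) i hi).ge
  · rw [eq_zero_of_notMem_of_sum_eq_one hf hfs hi, LinearMap.range_zero, finrank_bot]
    exact zero_le_one

end Rank

/-- The element `b` is tridiagonal with respect to the complete system of orthogonal idempotents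
`e 0, …, e d`. The system is indexed by `ℕ`, with `e i = 0` for `d < i`. -/
structure IsTridiagonal {R : Type*} [Ring R] (b : R) (e : ℕ → R) (d : ℕ) : Prop where
  orthogonalIdempotents : OrthogonalIdempotents e
  sum_eq_one : ∑ i ∈ range (d + 1), e i = 1
  mul_mul_eq_zero : ∀ i j, i + 1 < j ∨ j + 1 < i → e i * b * e j = 0

/-- The monic polynomials `P i` given by `P 0 = 1`, `P (-1) = 0` and
`X P i = P (i + 1) + a i P i + x i P (i - 1)`. The value `x 0` is irrelevant. -/
def threeTermPoly {K : Type*} [CommRing K] (a x : ℕ → K) : ℕ → K[X]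
  | 0 => 1
  | 1 => Polynomial.X - C (a 0)
  | n + 2 =>
      (Polynomial.X - C (a (n + 1))) * threeTermPoly a x (n + 1)
        - C (x (n + 1)) * threeTermPoly a x n

namespace IsTridiagonal

section Ring

variable {R R' Φ : Type*} [Ring R] [Ring R'] [FunLike Φ R R'] [RingHomClass Φ R R'] {b : R}
  {e : ℕ → R} {d : ℕ}

lemma map (h : IsTridiagonal b e d) (φ : Φ) : IsTridiagonal (φ b) (fun i => φ (e i)) d where
  orthogonalIdempotents := h.orthogonalIdempotents.map (φ : R →+* R')
  sum_eq_one := by rw [← map_sum, h.sum_eq_one, map_one]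
  mul_mul_eq_zero i j hij := by rw [← map_mul, ← map_mul, h.mul_mul_eq_zero i j hij, map_zero]

lemma of_map {φ : Φ} (hφ : Function.Injective φ)
    (h : IsTridiagonal (φ b) (fun i => φ (e i)) d) : IsTridiagonal b e d where
  orthogonalIdempotents :=
    (OrthogonalIdempotents.map_injective_iff (φ : R →+* R') hφ).mp h.orthogonalIdempotents
  sum_eq_one := hφ <| by rw [map_sum, h.sum_eq_one, map_one]
  mul_mul_eq_zero i j hij := hφ <| by
    rw [map_mul, map_mul, h.mul_mul_eq_zero i j hij, map_zero]

lemma shift (h : IsTridiagonal b e d) {r d' : ℕ} (hr : ∀ i, e i ≠ 0 → r ≤ i ∧ i ≤ r + d') :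
    IsTridiagonal b (fun i => e (r + i)) d' where
  orthogonalIdempotents := h.orthogonalIdempotents.embedding (addLeftEmbedding r)
  sum_eq_one := by
    have sum_Ico : ∑ i ∈ Ico r (r + d' + 1), e i = 1 := by
      refine eq_of_forall_mul_eq_of_sum_eq_one h.sum_eq_one fun i _ => ?_
      rw [mul_one]
      by_cases hi : i ∈ Ico r (r + d' + 1)
      · exact h.orthogonalIdempotents.mul_sum_of_mem hi
      · rw [h.orthogonalIdempotents.mul_sum_of_notMem hi]
        by_contra hne
        exact hi (by have := hr i (Ne.symm hne); simp only [mem_Ico]; omega)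
    rwa [sum_Ico_eq_sum_range, show r + d' + 1 - r = d' + 1 by omega] at sum_Ico
  mul_mul_eq_zero i j hij := h.mul_mul_eq_zero _ _ (by omega)

variable (h : IsTridiagonal b e d)
include h

lemma eq_zero_of_lt {i : ℕ} (hi : d < i) : e i = 0 :=
  eq_zero_of_notMem_of_sum_eq_one h.orthogonalIdempotents h.sum_eq_one (by simpa using hi)

lemma mul_zero_eq_add : b * e 0 = e 0 * b * e 0 + e 1 * b * e 0 := by
  refine eq_of_forall_mul_eq_of_sum_eq_one h.sum_eq_one fun k _ => ?_
  simp only [mul_add, ← mul_assoc, h.orthogonalIdempotents.mul_eq]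
  rcases (by omega : k = 0 ∨ k = 1 ∨ 0 + 1 < k) with rfl | rfl | hk
  · simp
  · simp
  · simp [h.mul_mul_eq_zero k 0 (.inr hk), show k ≠ 0 by omega, show k ≠ 1 by omega]

lemma mul_succ_eq_add (i : ℕ) :
    b * e (i + 1) =
      e i * b * e (i + 1) + e (i + 1) * b * e (i + 1) + e (i + 2) * b * e (i + 1) := by
  refine eq_of_forall_mul_eq_of_sum_eq_one h.sum_eq_one fun k _ => ?_
  simp only [mul_add, ← mul_assoc, h.orthogonalIdempotents.mul_eq]
  rcases (by omega : k = i ∨ k = i + 1 ∨ k = i + 2 ∨ k + 1 < i + 1 ∨ i + 1 + 1 < k) with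
    rfl | rfl | rfl | hk
  · simp
  · simp
  · simp
  · simp [h.mul_mul_eq_zero k (i + 1) hk, show k ≠ i by omega, show k ≠ i + 1 by omega,
      show k ≠ i + 2 by omega]

lemma mul_pow_mul_eq_zero {i n j : ℕ} (hij : i + n < j) : e j * b ^ n * e i = 0 := by
  induction n generalizing j with
  | zero => simp [h.orthogonalIdempotents.mul_eq, show j ≠ i by omega]
  | succ n ih => calc
      e j * b ^ (n + 1) * e i = ∑ k ∈ range (d + 1), e j * b * (e k * b ^ n * e i) := by
        simp only [← mul_sum, mul_assoc, ← sum_mul, h.sum_eq_one, one_mul, pow_succ']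
      _ = 0 := sum_eq_zero fun k _ => by
        by_cases hk : i + n < k
        · rw [ih hk, mul_zero]
        · rw [← mul_assoc, ← mul_assoc, h.mul_mul_eq_zero j k (by omega), zero_mul, zero_mul]

lemma mul_pow_succ_mul (i n : ℕ) :
    e (i + n + 1) * b ^ (n + 1) * e i = e (i + n + 1) * b * (e (i + n) * b ^ n * e i) := calc
  _ = ∑ k ∈ range (d + 1), e (i + n + 1) * b * (e k * b ^ n * e i) := by
    simp only [← mul_sum, mul_assoc, ← sum_mul, h.sum_eq_one, one_mul, pow_succ']
  _ = _ := by
    refine sum_eq_single _ (fun k _ hk => ?_) fun hd => ?_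
    · rcases hk.lt_or_gt with hlt | hgt
      · rw [← mul_assoc, ← mul_assoc, h.mul_mul_eq_zero _ k (by omega), zero_mul, zero_mul]
      · rw [h.mul_pow_mul_eq_zero hgt, mul_zero]
    · rw [h.eq_zero_of_lt (i := i + n) (by simpa using hd), zero_mul, zero_mul, mul_zero]

variable {K : Type*} [CommRing K] [Algebra K R] {a x : ℕ → K}

lemma mul_mul_pow_succ_mul_zero (ha : ∀ i, e i * b * e i = a i • e i)
    (hx : ∀ i, e i * b * e (i + 1) * b * e i = x (i + 1) • e i) (i : ℕ) :
    b * (e (i + 1) * b ^ (i + 1) * e 0) = e (i + 2) * b ^ (i + 2) * e 0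
      + a (i + 1) • (e (i + 1) * b ^ (i + 1) * e 0) + x (i + 1) • (e i * b ^ i * e 0) := by
  have raise (n : ℕ) : e (n + 1) * b ^ (n + 1) * e 0 = e (n + 1) * b * (e n * b ^ n * e 0) := by
    simpa only [zero_add] using h.mul_pow_succ_mul 0 n
  have lowering : e i * b * (e (i + 1) * b ^ (i + 1) * e 0) = x (i + 1) • (e i * b ^ i * e 0) := by
    rw [raise, ← smul_mul_assoc, ← smul_mul_assoc, ← hx]
    simp only [mul_assoc]
  have flat : e (i + 1) * b * (e (i + 1) * b ^ (i + 1) * e 0) =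
      a (i + 1) • (e (i + 1) * b ^ (i + 1) * e 0) := by
    simp only [← mul_assoc, ha, smul_mul_assoc]
  calc b * (e (i + 1) * b ^ (i + 1) * e 0)
      = e i * b * (e (i + 1) * b ^ (i + 1) * e 0)
        + e (i + 1) * b * (e (i + 1) * b ^ (i + 1) * e 0)
        + e (i + 2) * b * (e (i + 1) * b ^ (i + 1) * e 0) := by
        simp only [← mul_assoc]
        rw [h.mul_succ_eq_add i]
        simp only [add_mul]
    _ = _ := by
        rw [lowering, flat, ← raise (i + 1)]
        abel

theorem aeval_threeTermPoly_mul_zero (ha : ∀ i, e i * b * e i = a i • e i)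
    (hx : ∀ i, e i * b * e (i + 1) * b * e i = x (i + 1) • e i) (i : ℕ) :
    aeval b (threeTermPoly a x i) * e 0 = e i * b ^ i * e 0 := by
  induction i using Nat.twoStepInduction with
  | zero => simp [threeTermPoly, (h.orthogonalIdempotents.idem 0).eq]
  | one =>
    rw [threeTermPoly, map_sub, aeval_X, aeval_C, sub_mul, ← Algebra.smul_def, ← ha, pow_one,
      h.mul_zero_eq_add, add_sub_cancel_left]
  | more i ih ih' =>
    rw [threeTermPoly, map_sub, map_mul, map_mul, map_sub, aeval_X, aeval_C, aeval_C, sub_mul,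
      mul_assoc, mul_assoc, ih, ih', sub_mul, h.mul_mul_pow_succ_mul_zero ha hx, ← Algebra.smul_def,
      ← Algebra.smul_def]
    abel

end Ring

theorem aeval_threeTermPoly_mul_of_finrank_le_one {K V : Type*} [Field K] [AddCommGroup V]
    [Module K V] [FiniteDimensional K V] {b : Module.End K V} {e : ℕ → Module.End K V} {d : ℕ}
    (h : IsTridiagonal b e d) (he : ∀ i, Module.finrank K (LinearMap.range (e i)) ≤ 1)
    {a x : ℕ → K} (ha : ∀ i, a i = LinearMap.trace K V (e i * b))
    (hx : ∀ i, x (i + 1) = LinearMap.trace K V (e (i + 1) * b * e i * b)) (i : ℕ) :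
    aeval b (threeTermPoly a x i) * e 0 = e i * b ^ i * e 0 := by
  refine h.aeval_threeTermPoly_mul_zero (fun j => ?_) (fun j => ?_) i
  · rw [ha, mul_mul_eq_trace_smul_of_finrank_le_one (he j)]
  · rw [hx, mul_assoc _ (e j) b, LinearMap.trace_mul_comm, mul_assoc (e j) b, mul_assoc (e j),
      mul_assoc (e j) b, mul_mul_eq_trace_smul_of_finrank_le_one (he j)]
    simp only [mul_assoc]

end IsTridiagonal

section Krein

variable {n 𝕜 : Type*} [Fintype n] [DecidableEq n] [RCLike 𝕜]

open ComplexOrder in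
lemma mul_diagonal_mul_eq_zero_of_hadamard_mulVec {E F : Matrix n n 𝕜} (hE : IsStarProjection E)
    (hF : IsStarProjection F) {g : n → 𝕜} (hg : (E ⊙ Fᵀ) *ᵥ g = 0) : E * diagonal g * F = 0 := by
  have hE' : Eᴴ = E := hE.isSelfAdjoint
  have hF' : Fᴴ = F := hF.isSelfAdjoint
  have trace_eq : trace (E * diagonal g * F * (E * diagonal g * F)ᴴ) =
      star g ⬝ᵥ (E ⊙ Fᵀ) *ᵥ g := calc
    _ = trace (E * (E * diagonal g * (F * F) * diagonal (star g))) := by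
      rw [trace_mul_comm E]
      simp only [conjTranspose_mul, diagonal_conjTranspose, hE', hF', mul_assoc]
    _ = trace (diagonal (star g) * E * (Fᵀ * diagonal g)ᵀ) := by
      rw [hF.isIdempotentElem.eq, transpose_mul, transpose_transpose, diagonal_transpose,
        ← mul_assoc, ← mul_assoc, ← mul_assoc, hE.isIdempotentElem.eq, trace_mul_comm]
      simp only [mul_assoc]
    _ = _ := by rw [← dotProduct_vecMul_hadamard, dotProduct_mulVec]
  rw [← trace_mul_conjTranspose_self_eq_zero_iff, trace_eq, hg, dotProduct_zero]

end Krein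

namespace TSetup

variable (S : TSetup X)

lemma orthogonalIdempotents_E : OrthogonalIdempotents S.E := by
  refine OrthogonalIdempotents.iff_mul_eq.mpr fun i j => ?_
  rcases le_or_gt i S.D with hi | hi
  · rcases le_or_gt j S.D with hj | hj
    · exact S.hEidem i j hi hj
    · rw [S.hEzero j hj, mul_zero, if_neg (by omega)]
  · rw [S.hEzero i hi, zero_mul, ite_self]

lemma isStarProjection_E (i : ℕ) : IsStarProjection (S.E i) where
  isIdempotentElem := S.orthogonalIdempotents_E.idem i
  isSelfAdjoint := by
    rw [isSelfAdjoint_iff, star_eq_conjTranspose, conjTranspose, S.hEsymm]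
    exact S.hEreal i

lemma Astar_eq_diagonal : S.Astar = diagonal ((Fintype.card X : ℂ) • (S.E 1).col S.x) := by
  ext y z
  have hsymm : S.E 1 S.x y = S.E 1 y S.x := congrFun₂ (S.hEsymm 1) y S.x
  simp [S.hAstar, diagonal_apply, hsymm]

lemma hadamard_mul_E_one {i j : ℕ} (hi : i ≤ S.D) (hj : j ≤ S.D) (hij : i + 1 < j ∨ j + 1 < i) :
    (S.E i ⊙ S.E j) * S.E 1 = 0 := by
  have hD := S.hD3
  rw [S.hKrein i j hi hj, smul_mul_assoc, sum_mul, sum_eq_zero, smul_zero]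
  intro k _
  rw [smul_mul_assoc, S.orthogonalIdempotents_E.mul_eq]
  split_ifs with hk1
  · rw [hk1, S.hQpoly0 1 i j (by omega) hi hj (by omega), Complex.ofReal_zero, zero_smul]
  · rw [smul_zero]

lemma E_mul_Astar_mul_E_eq_zero {i j : ℕ} (hij : i + 1 < j ∨ j + 1 < i) :
    S.E i * S.Astar * S.E j = 0 := by
  rcases le_or_gt i S.D with hi | hi
  · rcases le_or_gt j S.D with hj | hj
    · rw [S.Astar_eq_diagonal]
      refine mul_diagonal_mul_eq_zero_of_hadamard_mulVec (S.isStarProjection_E i)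
        (S.isStarProjection_E j) ?_
      rw [S.hEsymm, mulVec_smul, ← mulVec_single_one, mulVec_mulVec,
        S.hadamard_mul_E_one hi hj hij, zero_mulVec, smul_zero]
    · rw [S.hEzero j hj, mul_zero]
  · rw [S.hEzero i hi, zero_mul, zero_mul]

lemma isTridiagonal_Astar_E : IsTridiagonal S.Astar S.E S.D where
  orthogonalIdempotents := S.orthogonalIdempotents_E
  sum_eq_one := S.hEsum
  mul_mul_eq_zero _ _ := S.E_mul_Astar_mul_E_eq_zero

lemma Estar_eq_diagonal (i : ℕ) :
    S.Estar i = diagonal fun y => if S.G.dist S.x y = i then 1 else 0 := by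
  ext y z
  rcases le_or_gt i S.D with hi | hi
  · rw [S.hEstar i hi, diagonal_apply, ← ite_and]
  · have hy : S.G.dist S.x y ≠ i := ((S.hDiamLe S.x y).trans_lt hi).ne
    simp [S.hEstarzero i hi, diagonal_apply, hy]

lemma orthogonalIdempotents_Estar : OrthogonalIdempotents S.Estar := by
  refine OrthogonalIdempotents.iff_mul_eq.mpr fun i j => ?_
  simp only [S.Estar_eq_diagonal, diagonal_mul_diagonal]
  split_ifs with hij
  · simp [hij]
  · rw [← diagonal_zero]
    congr! 2 with y
    grind

lemma sum_Estar : ∑ i ∈ range (S.D + 1), S.Estar i = 1 := by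
  ext y z
  simp [S.Estar_eq_diagonal, Matrix.sum_apply, diagonal_apply, Matrix.one_apply, S.hDiamLe]

lemma Estar_mul_A_mul_Estar_eq_zero {i j : ℕ} (hij : i + 1 < j ∨ j + 1 < i) :
    S.Estar i * S.A * S.Estar j = 0 := by
  ext y z
  rw [S.Estar_eq_diagonal, S.Estar_eq_diagonal, mul_diagonal, diagonal_mul, S.hA]
  by_cases hyz : S.G.Adj y z
  · have hdist := hyz.diff_dist_adj (u := S.x)
    split_ifs <;> first | omega | simp
  · simp [hyz]

lemma isTridiagonal_A_Estar : IsTridiagonal S.A S.Estar S.D where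
  orthogonalIdempotents := S.orthogonalIdempotents_Estar
  sum_eq_one := S.sum_Estar
  mul_mul_eq_zero _ _ := S.Estar_mul_A_mul_Estar_eq_zero

lemma A_mem_T : S.A ∈ S.T := Algebra.subset_adjoin (by simp)

lemma Astar_mem_T : S.Astar ∈ S.T := Algebra.subset_adjoin (by simp)

lemma E_mem_T (i : ℕ) : S.E i ∈ S.T := by
  have hθ : Set.InjOn (fun k => (S.θ k : ℂ)) (range (S.D + 1)) := fun k hk l hl hkl =>
    S.hθinj k l (mem_range_succ_iff.mp hk) (mem_range_succ_iff.mp hl)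
      (Complex.ofReal_inj.mp hkl)
  have mem := mem_adjoin_sum_smul S.orthogonalIdempotents_E S.hEsum hθ i
  rw [← S.hAspec] at mem
  exact Algebra.adjoin_mono (by simp) mem

lemma Estar_mem_T (i : ℕ) : S.Estar i ∈ S.T := by
  have hθ : Set.InjOn (fun k => (S.θstar k : ℂ)) (range (S.D + 1)) := fun k hk l hl hkl =>
    S.hθstarinj k l (mem_range_succ_iff.mp hk) (mem_range_succ_iff.mp hl)
      (Complex.ofReal_inj.mp hkl)
  have mem := mem_adjoin_sum_smul S.orthogonalIdempotents_Estar S.sum_Estar hθ i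
  rw [← S.hAstarspec] at mem
  exact Algebra.adjoin_mono (by simp) mem

end TSetup

namespace TMod

variable {S : TSetup X} (M : TMod S)

/-- The representation of `T` on the module `W`. -/
def rep : S.T →ₐ[ℂ] Module.End ℂ M.W where
  toFun B := B.1.mulVecLin.restrict (M.hWinv B B.2)
  map_one' := by ext; simp
  map_mul' B C := LinearMap.ext fun w => Subtype.ext (mulVec_mulVec (w : X → ℂ) B.1 C.1).symm
  map_zero' := by ext; simp
  map_add' B C := LinearMap.ext fun w => Subtype.ext (add_mulVec B.1 C.1 (w : X → ℂ))
  commutes' c := by ext; simp [Algebra.algebraMap_eq_smul_one]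

lemma coe_rep_apply (B : S.T) (w : M.W) : (M.rep B w : X → ℂ) = (B : Matrix X X ℂ) *ᵥ w := rfl

lemma trW_eq_trace_rep (B : S.T) : trW S M B = LinearMap.trace ℂ M.W (M.rep B) := by
  have hB : ∀ w ∈ M.W, (B : Matrix X X ℂ).mulVecLin w ∈ M.W := M.hWinv B B.2
  rw [trW, actW, dif_pos hB]
  rfl

lemma map_subtype_range_rep (B : S.T) :
    (LinearMap.range (M.rep B)).map M.W.subtype = M.W.map (B : Matrix X X ℂ).mulVecLin := by
  rw [← LinearMap.range_comp, ← LinearMap.range_domRestrict]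
  rfl

lemma finrank_range_rep (B : S.T) : Module.finrank ℂ (LinearMap.range (M.rep B)) =
    Module.finrank ℂ (M.W.map (B : Matrix X X ℂ).mulVecLin) := by
  rw [← M.map_subtype_range_rep, Submodule.finrank_map_subtype_eq]

lemma rep_ne_zero_iff (B : S.T) :
    M.rep B ≠ 0 ↔ M.W.map (B : Matrix X X ℂ).mulVecLin ≠ ⊥ := by
  rw [← M.map_subtype_range_rep, ne_eq, ne_eq,
    (Submodule.map_injective_of_injective M.W.subtype_injective).eq_iff' (Submodule.map_bot _),
    LinearMap.range_eq_bot]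

section Tridiagonal

variable {B : Matrix X X ℂ} (hB : B ∈ S.T) {F : ℕ → Matrix X X ℂ} (hF : ∀ i, F i ∈ S.T) {D r : ℕ}
  (h : IsTridiagonal B F D) (hr : ∀ i, M.W.map (F i).mulVecLin ≠ ⊥ → r ≤ i ∧ i ≤ r + M.d)
include h hr

lemma isTridiagonal_rep :
    IsTridiagonal (M.rep ⟨B, hB⟩) (fun i => M.rep ⟨F (r + i), hF (r + i)⟩) M.d := by
  have hT : IsTridiagonal (⟨B, hB⟩ : S.T) (fun i => ⟨F i, hF i⟩) D :=
    .of_map (φ := S.T.val) Subtype.val_injective h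
  have hrep : IsTridiagonal (M.rep ⟨B, hB⟩) (fun i => M.rep ⟨F i, hF i⟩) D := hT.map M.rep
  exact hrep.shift fun i hi => hr i ((M.rep_ne_zero_iff _).mp hi)

variable (hF1 : ∀ i, Module.finrank ℂ (M.W.map (F (r + i)).mulVecLin) ≤ 1) {a x : ℕ → ℂ}
  (ha : ∀ i, a i = trW S M (F (r + i) * B))
  (hx : ∀ i, x (i + 1) = trW S M (F (r + (i + 1)) * B * F (r + i) * B))
include hF1 ha hx

lemma rep_aeval_threeTermPoly_mul (i : ℕ) :
    M.rep (aeval ⟨B, hB⟩ (threeTermPoly a x i) * ⟨F r, hF r⟩) =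
      M.rep (⟨F (r + i), hF (r + i)⟩ * ⟨B, hB⟩ ^ i * ⟨F r, hF r⟩) := by
  let b : S.T := ⟨B, hB⟩
  let f (j : ℕ) : S.T := ⟨F (r + j), hF (r + j)⟩
  have a_eq (j : ℕ) : a j = LinearMap.trace ℂ M.W (M.rep (f j) * M.rep b) := by
    rw [← map_mul, ← trW_eq_trace_rep]
    exact ha j
  have x_eq (j : ℕ) : x (j + 1) =
      LinearMap.trace ℂ M.W (M.rep (f (j + 1)) * M.rep b * M.rep (f j) * M.rep b) := by
    rw [← map_mul, ← map_mul, ← map_mul, ← trW_eq_trace_rep]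
    exact hx j
  simp only [map_mul, map_pow, ← aeval_algHom_apply]
  exact (M.isTridiagonal_rep hB hF h hr).aeval_threeTermPoly_mul_of_finrank_le_one
    (fun j => (M.finrank_range_rep (f j)).trans_le (hF1 j)) a_eq x_eq i

include hB hF in
theorem aeval_threeTermPoly_mulVec {v : X → ℂ} (hv : v ∈ M.W.map (F r).mulVecLin) :
    (∀ i, aeval B (threeTermPoly a x i) *ᵥ v = F (r + i) *ᵥ (B ^ i *ᵥ v)) ∧
      aeval B (threeTermPoly a x (M.d + 1)) *ᵥ v = 0 := by
  obtain ⟨w, hw, rfl⟩ := hv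
  have identity (i : ℕ) : aeval B (threeTermPoly a x i) *ᵥ (F r *ᵥ w) =
      F (r + i) *ᵥ (B ^ i *ᵥ (F r *ᵥ w)) := by
    have apply_w := congrArg Subtype.val
      (LinearMap.congr_fun (M.rep_aeval_threeTermPoly_mul hB hF h hr hF1 ha hx i) ⟨w, hw⟩)
    simpa [coe_rep_apply, ← aeval_subalgebra_coe, mul_assoc] using apply_w
  refine ⟨identity, (identity _).trans ?_⟩
  have rep_eq_zero : M.rep ⟨F (r + (M.d + 1)), hF _⟩ = 0 :=
    (M.isTridiagonal_rep hB hF h hr).eq_zero_of_lt (Nat.lt_succ_self _)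
  have mem : B ^ (M.d + 1) *ᵥ (F r *ᵥ w) ∈ M.W :=
    M.hWinv _ (pow_mem hB _) _ (M.hWinv _ (hF r) w hw)
  exact congrArg Subtype.val (LinearMap.congr_fun rep_eq_zero ⟨_, mem⟩)

end Tridiagonal

lemma finrank_map_E_le_one (i : ℕ) :
    Module.finrank ℂ (M.W.map (S.E (M.t + i)).mulVecLin) ≤ 1 := by
  have hEstar := M.isTridiagonal_rep S.A_mem_T S.Estar_mem_T S.isTridiagonal_A_Estar
    fun j => (M.hr j).mp
  have hE := M.isTridiagonal_rep S.Astar_mem_T S.E_mem_T S.isTridiagonal_Astar_E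
    fun j => (M.ht j).mp
  rw [← M.finrank_range_rep ⟨_, S.E_mem_T (M.t + i)⟩]
  refine finrank_range_le_one_of_ne_zero hEstar.orthogonalIdempotents hEstar.sum_eq_one
    hE.orthogonalIdempotents hE.sum_eq_one (fun j _ => ?_) (fun j hj => ?_) i
  · exact (M.finrank_range_rep _).trans_le (M.hthin _)
  · rw [M.rep_ne_zero_iff, M.ht]
    have := mem_range_succ_iff.mp hj
    omega

end TMod

lemma pW_eq_threeTermPoly (S : TSetup X) (M : TMod S) (n : ℕ) :
    pW S M n = threeTermPoly (aW S M) (xW S M) n := by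
  induction n using Nat.twoStepInduction with
  | zero => rfl
  | one => rfl
  | more n ih ih' => rw [pW, threeTermPoly, ih, ih']

lemma pstarW_eq_threeTermPoly (S : TSetup X) (M : TMod S) (n : ℕ) :
    pstarW S M n = threeTermPoly (astarW S M) (xstarW S M) n := by
  induction n using Nat.twoStepInduction with
  | zero => rfl
  | one => rfl
  | more n ih ih' => rw [pstarW, threeTermPoly, ih, ih']

/-- For nonzero `v ∈ E*_r W`: `p_i(A) v = E*_{r+i} A^i v` for `0 ≤ i ≤ d` and
`p_{d+1}(A) v = 0`; dually for nonzero `u ∈ E_t W` with `p*_i(A*)`. -/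
theorem stmt6 (S : TSetup X) (M : TMod S) (hd : 0 < M.d) :
    (∀ v ∈ M.W.map (S.Estar M.r).mulVecLin, v ≠ 0 →
      (∀ i ≤ M.d,
        (Polynomial.aeval S.A (pW S M i)) *ᵥ v = S.Estar (M.r + i) *ᵥ (S.A ^ i *ᵥ v)) ∧
      (Polynomial.aeval S.A (pW S M (M.d + 1))) *ᵥ v = 0) ∧
    (∀ u ∈ M.W.map (S.E M.t).mulVecLin, u ≠ 0 →
      (∀ i ≤ M.d,
        (Polynomial.aeval S.Astar (pstarW S M i)) *ᵥ u = S.E (M.t + i) *ᵥ (S.Astar ^ i *ᵥ u)) ∧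
      (Polynomial.aeval S.Astar (pstarW S M (M.d + 1))) *ᵥ u = 0) := by
  simp only [pW_eq_threeTermPoly, pstarW_eq_threeTermPoly]
  refine ⟨fun v hv _ => ?_, fun u hu _ => ?_⟩
  · obtain ⟨hi, hlast⟩ := M.aeval_threeTermPoly_mulVec S.A_mem_T S.Estar_mem_T
      S.isTridiagonal_A_Estar (fun i => (M.hr i).mp) (fun i => M.hthin _)
      (a := aW S M) (x := xW S M) (fun _ => rfl) (fun _ => rfl) hv
    exact ⟨fun i _ => hi i, hlast⟩
  · obtain ⟨hi, hlast⟩ := M.aeval_threeTermPoly_mulVec S.Astar_mem_T S.E_mem_T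
      S.isTridiagonal_Astar_E (fun i => (M.ht i).mp) M.finrank_map_E_le_one
      (a := astarW S M) (x := xstarW S M) (fun _ => rfl) (fun _ => rfl) hu
    exact ⟨fun i _ => hi i, hlast⟩
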